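/- ζ_so(2,2,2,2) = (3/700)·ζ(2)^4 = (2·3/(5·9!))·π^8 = π^8/302400. -/

import Mathlib

noncomputable def zetaSO (s1 s2 s3 s4 : ℕ) : ℝ :=
  ∑' (m : ℕ+) (n : ℕ+),
    1 / ((m : ℝ) ^ s1 * (n : ℝ) ^ s2 * ((m : ℝ) + (n : ℝ)) ^ s3 * ((m : ℝ) + 2 * (n : ℝ)) ^ s4)

noncomputable def rzeta (s : ℕ) : ℝ := ∑' m : ℕ+, 1 / (m : ℝ) ^ s

/-!
Put `a = n` and `b = m + n`. The summand of `ζ_so(2,2,2,2)` becomes `1 / ((a b)² (b² - a²)²)`, which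
is invariant under the Weyl group of type `B₂` (generated by `a ↦ -a` and `a ↔ b`), and `0 < a < b`
is a Weyl chamber. Hence `8 ζ_so(2,2,2,2)` is the sum over all of `ℤ²`, where division by zero
discards the walls. For fixed `a`, the sum over `b ∈ ℤ` is found by partial fractions from
`∑ 1 / (b + k)² = π² / 3` and the telescoping sum `∑ (1 / b - 1 / (b + k)) = 0`; it equals
`π² / (2 a⁶) - 39 / (8 a⁸)`, so that `ζ(6)` and `ζ(8)` finish the computation.
-/

open Filter Topology

section Series

variable {E : Type*} [AddCommGroup E] [TopologicalSpace E] [IsTopologicalAddGroup E]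

theorem hasSum_of_eqOn_compl_finset {ι : Type*} {f g : ι → E} {a b : E} (hg : HasSum g a)
    (s : Finset ι) (h : ∀ i ∉ s, f i = g i) (hb : a + ∑ i ∈ s, (f i - g i) = b) :
    HasSum f b := by
  have hdiff : HasSum (fun i ↦ f i - g i) (∑ i ∈ s, (f i - g i)) :=
    hasSum_sum_of_ne_finset_zero fun i hi ↦ sub_eq_zero.mpr (h i hi)
  simpa only [add_sub_cancel, hb] using hg.add hdiff

theorem hasSum_int_of_even {f : ℤ → E} {a : E} (heven : f.Even) (hzero : f 0 = 0)
    (h : HasSum (fun n : ℕ ↦ f n) a) : HasSum f (2 • a) := by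
  have hneg : HasSum (fun n : ℕ ↦ f (-n)) a := by simpa only [heven _] using h
  simpa [two_nsmul, hzero] using h.of_nat_of_neg hneg

theorem hasSum_int_sub_add_one [T2Space E] {f : ℤ → E} (hf : Tendsto f cofinite (𝓝 0))
    (hs : Summable fun n : ℤ ↦ f n - f (n + 1)) : HasSum (fun n : ℤ ↦ f n - f (n + 1)) 0 := by
  have hcofinite : Tendsto ((↑) : ℕ → ℤ) atTop cofinite := by
    simpa only [Nat.cofinite_eq_atTop] using Nat.cast_injective.tendsto_cofinite
  have hneg : Tendsto (fun N : ℕ ↦ f (-N)) atTop (𝓝 0) :=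
    hf.comp (neg_injective.tendsto_cofinite.comp hcofinite)
  have hpartial : Tendsto (fun N : ℕ ↦ ∑ n ∈ Finset.Ico (-(N : ℤ)) N, (f n - f (n + 1)))
      atTop (𝓝 0) := by
    simpa only [Finset.sum_Ico_int_sub, sub_zero, Function.comp_apply] using
      hneg.sub (hf.comp hcofinite)
  have hlim := SummationFilter.hasSum_symmetricIco_int_iff.mp
    (hs.hasSum.mono_left (SummationFilter.symmetricIco ℤ).le_atTop)
  exact tendsto_nhds_unique hlim hpartial ▸ hs.hasSum

theorem hasSum_int_sub_add {f : ℤ → E} (h : HasSum (fun n : ℤ ↦ f n - f (n + 1)) 0) (k : ℤ) :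
    HasSum (fun n : ℤ ↦ f n - f (n + k)) 0 := by
  have hshift (j : ℤ) : HasSum (fun n : ℤ ↦ f (n + j) - f (n + j + 1)) 0 :=
    (Equiv.addRight j).hasSum_iff.mpr h
  induction k with
  | zero => simp
  | succ j ih => simpa [add_assoc] using ih.add (hshift j)
  | pred j ih => simpa [add_assoc] using ih.sub (hshift (-j - 1))

end Series

section LatticeFolding

variable {E : Type*} [NormedAddCommGroup E] [CompleteSpace E]

theorem tsum_pnat_prod_eq_two_nsmul {f : ℕ+ × ℕ+ → E} (hs : Summable f)
    (hswap : ∀ p, f p.swap = f p) (hdiag : ∀ a, f (a, a) = 0) :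
    ∑' p, f p = 2 • ∑' p : ℕ+ × ℕ+, f (p.2, p.1 + p.2) := by
  let upper (p : ℕ+ × ℕ+) : ℕ+ × ℕ+ := (p.2, p.1 + p.2)
  have hupper : Function.Injective upper := by
    rintro ⟨m, n⟩ ⟨m₂, n₂⟩ h
    obtain ⟨rfl, hm⟩ : n = n₂ ∧ m + n = m₂ + n₂ := by simpa [upper] using h
    simpa using hm
  have hinj : Function.Injective (Sum.elim upper (Prod.swap ∘ upper)) := by
    refine hupper.sumElim (Prod.swap_injective.comp hupper) fun p q h ↦ ?_
    simp only [upper, Function.comp_apply, Prod.swap_prod_mk, Prod.mk.injEq] at h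
    have := (PNat.lt_add_left p.2 p.1).trans_eq h.2
    exact (this.trans (PNat.lt_add_left q.2 q.1)).ne h.1
  have hsupport : Function.support f ⊆ Set.range (Sum.elim upper (Prod.swap ∘ upper)) := by
    rintro ⟨a, b⟩ hab
    rcases lt_trichotomy a b with h | rfl | h
    · exact ⟨.inl (b - a, a), by simp [upper, PNat.sub_add_of_lt h]⟩
    · exact absurd (hdiag a) hab
    · exact ⟨.inr (a - b, b), by simp [upper, PNat.sub_add_of_lt h]⟩
  have hsum : HasSum (f ∘ upper) (∑' p, f (upper p)) := (hs.comp_injective hupper).hasSum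
  have hfold := HasSum.sum (f := f ∘ Sum.elim upper (Prod.swap ∘ upper)) hsum
    (by simpa [Function.comp_def, hswap] using hsum)
  rw [← hinj.tsum_eq hsupport, two_nsmul]
  exact hfold.tsum_eq

theorem tsum_int_prod_eq_four_nsmul {f : ℤ × ℤ → E} (hs : Summable f)
    (hneg_left : ∀ a b, f (-a, b) = f (a, b)) (hneg_right : ∀ a b, f (a, -b) = f (a, b))
    (hzero_left : ∀ b, f (0, b) = 0) (hzero_right : ∀ a, f (a, 0) = 0) :
    ∑' p, f p = 4 • ∑' p : ℕ+ × ℕ+, f (p.1, p.2) := by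
  have hinj : Function.Injective fun p : ℕ+ × ℕ+ ↦ ((p.1 : ℤ), (p.2 : ℤ)) := by
    rintro ⟨a, b⟩ ⟨a₂, b₂⟩ h
    simpa using h
  have hrow (a : ℤ) : ∑' b, f (a, b) = 2 • ∑' b : ℕ+, f (a, b) := by
    rw [tsum_int_eq_zero_add_two_mul_tsum_pnat (f := fun b ↦ f (a, b)) (hneg_right a)
      (hs.prod_factor a), hzero_right, zero_add]
  have heven : (fun a ↦ ∑' b, f (a, b)).Even := fun a ↦ by simp only [hneg_left]
  have hpos : Summable fun a : ℕ+ ↦ ∑' b : ℕ+, f (a, b) := (hs.comp_injective hinj).prod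
  calc ∑' p, f p
      = ∑' a, ∑' b, f (a, b) := hs.tsum_prod
    _ = 2 • ∑' a : ℕ+, ∑' b, f (a, b) := by
      rw [tsum_int_eq_zero_add_two_mul_tsum_pnat heven hs.prod]
      simp [hzero_left]
    _ = 4 • ∑' (a : ℕ+) (b : ℕ+), f (a, b) := by
      simp_rw [hrow, hpos.tsum_const_smul 2, smul_smul]
      norm_num
    _ = 4 • ∑' p : ℕ+ × ℕ+, f (p.1, p.2) := by
      congrm 4 • ?_
      exact (hs.comp_injective hinj).tsum_prod.symm

theorem tsum_int_prod_eq_eight_nsmul {f : ℤ × ℤ → E} (hs : Summable f)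
    (hneg : ∀ a b, f (-a, b) = f (a, b)) (hswap : ∀ a b, f (b, a) = f (a, b))
    (hzero : ∀ b, f (0, b) = 0) (hdiag : ∀ a, f (a, a) = 0) :
    ∑' p, f p = 8 • ∑' p : ℕ+ × ℕ+, f (p.2, p.1 + p.2) := by
  have hpos : Summable fun p : ℕ+ × ℕ+ ↦ f (p.1, p.2) :=
    hs.comp_injective (i := fun p : ℕ+ × ℕ+ ↦ ((p.1 : ℤ), (p.2 : ℤ))) fun p q h ↦ by
      simpa [Prod.ext_iff] using h
  have hfold := tsum_pnat_prod_eq_two_nsmul hpos (fun p ↦ hswap _ _) (fun a ↦ hdiag a)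
  rw [tsum_int_prod_eq_four_nsmul hs hneg (fun a b ↦ by rw [hswap, hneg, hswap]) hzero
    (fun a ↦ by rw [hswap, hzero]), hfold, smul_smul]
  simp

end LatticeFolding

section ZetaValues

theorem bernoulli_six : bernoulli 6 = 1 / 42 := by
  have h5 : bernoulli' 5 = 0 := bernoulli'_eq_zero_of_odd (by decide) (by norm_num)
  rw [bernoulli_eq_bernoulli'_of_ne_one (by norm_num), bernoulli'_def]
  norm_num [Finset.sum_range_succ, h5, Nat.choose]

theorem bernoulli_eight : bernoulli 8 = -1 / 30 := by
  have h5 : bernoulli' 5 = 0 := bernoulli'_eq_zero_of_odd (by decide) (by norm_num)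
  have h6 : bernoulli' 6 = 1 / 42 := by
    rw [← bernoulli_eq_bernoulli'_of_ne_one (by norm_num), bernoulli_six]
  have h7 : bernoulli' 7 = 0 := bernoulli'_eq_zero_of_odd (by decide) (by norm_num)
  rw [bernoulli_eq_bernoulli'_of_ne_one (by norm_num), bernoulli'_def]
  norm_num [Finset.sum_range_succ, h5, h6, h7, Nat.choose]

theorem hasSum_one_div_int_pow_two_mul {k : ℕ} (hk : k ≠ 0) :
    HasSum (fun n : ℤ ↦ 1 / (n : ℝ) ^ (2 * k))
      (2 • ((-1 : ℝ) ^ (k + 1) * 2 ^ (2 * k - 1) * Real.pi ^ (2 * k) * bernoulli (2 * k) /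
        (2 * k).factorial)) :=
  hasSum_int_of_even (fun n ↦ by simp [(even_two_mul k).neg_pow]) (by simp [hk])
    (by simpa using hasSum_zeta_nat hk)

theorem hasSum_one_div_int_sq : HasSum (fun n : ℤ ↦ 1 / (n : ℝ) ^ 2) (Real.pi ^ 2 / 3) := by
  convert! hasSum_one_div_int_pow_two_mul one_ne_zero using 1
  rw [mul_one, bernoulli_two]
  norm_num [Nat.factorial]
  ring

theorem hasSum_one_div_int_pow_six :
    HasSum (fun n : ℤ ↦ 1 / (n : ℝ) ^ 6) (2 * Real.pi ^ 6 / 945) := by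
  convert! hasSum_one_div_int_pow_two_mul three_ne_zero using 1
  norm_num [bernoulli_six, Nat.factorial]
  ring

theorem hasSum_one_div_int_pow_eight :
    HasSum (fun n : ℤ ↦ 1 / (n : ℝ) ^ 8) (Real.pi ^ 8 / 4725) := by
  convert! hasSum_one_div_int_pow_two_mul four_ne_zero using 1
  norm_num [bernoulli_eight, Nat.factorial]
  ring

theorem rzeta_eq_tsum_nat {s : ℕ} (hs : s ≠ 0) : rzeta s = ∑' n : ℕ, 1 / (n : ℝ) ^ s :=
  tsum_pnat_eq_tsum_of_eq_zero (f := fun n : ℕ ↦ 1 / (n : ℝ) ^ s) (by simp [hs])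

theorem rzeta_two : rzeta 2 = Real.pi ^ 2 / 6 :=
  (rzeta_eq_tsum_nat two_ne_zero).trans hasSum_zeta_two.tsum_eq

end ZetaValues

section PartialFractions

theorem hasSum_one_div_int_add_sq (k : ℤ) :
    HasSum (fun n : ℤ ↦ 1 / ((n : ℝ) + k) ^ 2) (Real.pi ^ 2 / 3) := by
  simpa [Function.comp_def] using (Equiv.addRight k).hasSum_iff.mpr hasSum_one_div_int_sq

theorem summable_one_div_int_mul_add (k : ℤ) :
    Summable fun n : ℤ ↦ 1 / ((n : ℝ) * (n + k)) := by
  refine (hasSum_one_div_int_sq.add (hasSum_one_div_int_add_sq k)).summable.of_norm_bounded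
    fun n ↦ ?_
  have amgm (x y : ℝ) : |x * y| ≤ x ^ 2 + y ^ 2 := by
    rw [abs_le]
    constructor <;> nlinarith [sq_nonneg (x + y), sq_nonneg (x - y)]
  simpa [mul_comm] using amgm (n : ℝ)⁻¹ ((n : ℝ) + k)⁻¹

theorem hasSum_one_div_int_sub_one_div_add (k : ℤ) :
    HasSum (fun n : ℤ ↦ 1 / (n : ℝ) - 1 / (n + k)) 0 := by
  have htendsto : Tendsto (fun n : ℤ ↦ 1 / (n : ℝ)) cofinite (𝓝 0) := by
    simpa only [one_div, Function.comp_def] using tendsto_inv₀_cobounded.comp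
      (Metric.cobounded_eq_cocompact (α := ℝ) ▸ Int.tendsto_coe_cofinite)
  have hsummable : Summable fun n : ℤ ↦ 1 / (n : ℝ) - 1 / ((n + 1 : ℤ) : ℝ) := by
    refine (summable_one_div_int_mul_add 1).congr_cofinite ?_
    filter_upwards [eventually_cofinite_ne 0, eventually_cofinite_ne (-1)] with n hn₀ hn₁
    have hn₀' : (n : ℝ) ≠ 0 := mod_cast hn₀
    have hn₁' : (n : ℝ) + 1 ≠ 0 := mod_cast mt eq_neg_of_add_eq_zero_left hn₁
    push_cast
    field_simp
    ring
  simpa using hasSum_int_sub_add (hasSum_int_sub_add_one htendsto hsummable) k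

theorem hasSum_one_div_int_mul_add {k : ℤ} (hk : k ≠ 0) :
    HasSum (fun n : ℤ ↦ 1 / ((n : ℝ) * (n + k))) (2 / (k : ℝ) ^ 2) := by
  have hk' : (k : ℝ) ≠ 0 := by exact_mod_cast hk
  refine hasSum_of_eqOn_compl_finset ((hasSum_one_div_int_sub_one_div_add k).mul_left (1 / (k : ℝ)))
    {0, -k} (fun n hn ↦ ?_) ?_
  · obtain ⟨hn₀, hnk⟩ : n ≠ 0 ∧ n + k ≠ 0 := by simpa [eq_neg_iff_add_eq_zero] using hn
    have hn₀' : (n : ℝ) ≠ 0 := mod_cast hn₀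
    have hnk' : (n : ℝ) + k ≠ 0 := mod_cast hnk
    field_simp
    ring
  · rw [Finset.sum_pair (by simpa [eq_comm] using hk)]
    simp only [one_div, mul_zero, Int.cast_zero, zero_add, zero_mul, div_zero, zero_sub, mul_neg,
      sub_neg_eq_add, Int.cast_neg, neg_add_cancel, inv_neg, sub_zero]
    field_simp
    ring

theorem hasSum_one_div_int_mul_add_sq {k : ℤ} (hk : k ≠ 0) :
    HasSum (fun n : ℤ ↦ 1 / ((n : ℝ) * (n + k)) ^ 2)
      (2 * Real.pi ^ 2 / (3 * (k : ℝ) ^ 2) - 6 / (k : ℝ) ^ 4) := by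
  have hk' : (k : ℝ) ≠ 0 := by exact_mod_cast hk
  have hsum := (hasSum_one_div_int_sq.add (hasSum_one_div_int_add_sq k)).sub
    ((hasSum_one_div_int_mul_add hk).mul_left 2)
  refine hasSum_of_eqOn_compl_finset (hsum.mul_left (1 / (k : ℝ) ^ 2))
    {0, -k} (fun n hn ↦ ?_) ?_
  · obtain ⟨hn₀, hnk⟩ : n ≠ 0 ∧ n + k ≠ 0 := by simpa [eq_neg_iff_add_eq_zero] using hn
    have hn₀' : (n : ℝ) ≠ 0 := mod_cast hn₀
    have hnk' : (n : ℝ) + k ≠ 0 := mod_cast hnk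
    field_simp
    ring
  · rw [Finset.sum_pair (by simpa [eq_comm] using hk)]
    simp only [one_div, Int.cast_zero, zero_add, zero_mul, ne_eq, OfNat.ofNat_ne_zero,
      not_false_eq_true, zero_pow, div_zero, mul_zero, sub_zero, zero_sub, Int.cast_neg,
      neg_add_cancel, even_two, Even.neg_pow, add_zero]
    field_simp
    ring

theorem hasSum_one_div_int_sq_sub_sq {a : ℤ} (ha : a ≠ 0) :
    HasSum (fun b : ℤ ↦ 1 / ((b : ℝ) ^ 2 - a ^ 2)) (1 / (2 * (a : ℝ) ^ 2)) := by
  have hsum := (Equiv.subRight a).hasSum_iff.mpr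
    (hasSum_one_div_int_mul_add (k := 2 * a) (by simpa using ha))
  convert! hsum using 1
  · ext b
    have hfactor : (b : ℝ) ^ 2 - a ^ 2 = (b - a) * (b - a + 2 * a) := by ring
    simp [hfactor]
  · push_cast
    field_simp

theorem hasSum_one_div_int_sq_sub_sq_sq {a : ℤ} (ha : a ≠ 0) :
    HasSum (fun b : ℤ ↦ 1 / ((b : ℝ) ^ 2 - a ^ 2) ^ 2)
      (Real.pi ^ 2 / (6 * (a : ℝ) ^ 2) - 3 / (8 * (a : ℝ) ^ 4)) := by
  have hsum := (Equiv.subRight a).hasSum_iff.mpr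
    (hasSum_one_div_int_mul_add_sq (k := 2 * a) (by simpa using ha))
  convert! hsum using 1
  · ext b
    have hfactor : (b : ℝ) ^ 2 - a ^ 2 = (b - a) * (b - a + 2 * a) := by ring
    simp [hfactor]
  · push_cast
    field_simp
    ring

theorem hasSum_one_div_int_sq_mul_sq_sub_sq_sq {a : ℤ} (ha : a ≠ 0) :
    HasSum (fun b : ℤ ↦ 1 / ((b : ℝ) ^ 2 * ((b : ℝ) ^ 2 - a ^ 2) ^ 2))
      (Real.pi ^ 2 / (2 * (a : ℝ) ^ 4) - 39 / (8 * (a : ℝ) ^ 6)) := by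
  have ha' : (a : ℝ) ≠ 0 := by exact_mod_cast ha
  have hsum := ((hasSum_one_div_int_sq.sub (hasSum_one_div_int_sq_sub_sq ha)).mul_left
    (1 / (a : ℝ) ^ 4)).add ((hasSum_one_div_int_sq_sub_sq_sq ha).mul_left (1 / (a : ℝ) ^ 2))
  refine hasSum_of_eqOn_compl_finset hsum {0, a, -a} (fun b hb ↦ ?_) ?_
  · obtain ⟨hb₀, hba⟩ : b ≠ 0 ∧ b ^ 2 - a ^ 2 ≠ 0 := by
      simpa [sub_eq_zero, sq_eq_sq_iff_eq_or_eq_neg] using hb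
    have hb₀' : (b : ℝ) ≠ 0 := mod_cast hb₀
    have hba' : (b : ℝ) ^ 2 - a ^ 2 ≠ 0 := mod_cast hba
    field_simp
    ring
  · rw [Finset.sum_insert (by simpa [eq_comm] using ha),
      Finset.sum_pair (by simpa [self_eq_neg] using ha)]
    simp only [one_div, mul_inv_rev, Int.cast_zero, ne_eq, OfNat.ofNat_ne_zero, not_false_eq_true,
      zero_pow, zero_sub, even_two, Even.neg_pow, zero_mul, div_zero, inv_neg, sub_neg_eq_add,
      zero_add, neg_add_rev, sub_self, mul_zero, sub_zero, add_zero, Int.cast_neg]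
    field_simp
    ring

end PartialFractions

/-- The summand of the so(5) zeta function `ζ_so(2p, 2q, 2q, 2p)` in the coordinates
`(a, b) = (n, m + n)`, extended to all of `ℤ²`. For `p, q ≠ 0` it is `0` on the walls
`a = 0`, `b = 0`, `a = ±b`, because `1 / 0 = 0`. -/
noncomputable def so5Summand (p q : ℕ) (x : ℤ × ℤ) : ℝ :=
  1 / (((x.1 : ℝ) * x.2) ^ (2 * q) * ((x.2 : ℝ) ^ 2 - x.1 ^ 2) ^ (2 * p))

theorem so5Summand_nonneg (p q : ℕ) (x : ℤ × ℤ) : 0 ≤ so5Summand p q x := by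
  simp only [so5Summand, pow_mul]
  positivity

theorem tsum_so5Summand_eq_eight_mul_zetaSO {p q : ℕ} (hp : p ≠ 0) (hq : q ≠ 0)
    (hs : Summable (so5Summand p q)) :
    ∑' x, so5Summand p q x = 8 * zetaSO (2 * p) (2 * q) (2 * q) (2 * p) := by
  have hchamber (m n : ℕ+) : so5Summand p q ((n : ℤ), (m : ℤ) + n) =
      1 / ((m : ℝ) ^ (2 * p) * (n : ℝ) ^ (2 * q) * ((m : ℝ) + n) ^ (2 * q) *
        ((m : ℝ) + 2 * n) ^ (2 * p)) := by
    have hfactor : ((m : ℝ) + n) ^ 2 - (n : ℝ) ^ 2 = m * (m + 2 * n) := by ring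
    simp only [so5Summand, Int.cast_add, Int.cast_natCast, hfactor, mul_pow]
    ring
  have hinj : Function.Injective fun x : ℕ+ × ℕ+ ↦ ((x.2 : ℤ), (x.1 : ℤ) + x.2) := by
    rintro ⟨m, n⟩ ⟨m₂, n₂⟩ h
    obtain ⟨rfl, hm⟩ : n = n₂ ∧ (m : ℤ) + n = m₂ + n₂ := by simpa using h
    simpa using hm
  have hiterated := (hs.comp_injective hinj).tsum_prod
  simp only [Function.comp_apply, hchamber] at hiterated
  rw [tsum_int_prod_eq_eight_nsmul hs]
  · simp only [hchamber, hiterated, zetaSO, nsmul_eq_mul, Nat.cast_ofNat]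
  · intro a b
    simp [so5Summand, (even_two_mul q).neg_pow]
  · intro a b
    rw [so5Summand, so5Summand, ← neg_sub ((b : ℝ) ^ 2), (even_two_mul p).neg_pow, mul_comm (b : ℝ)]
  · simp [so5Summand, hq]
  · simp [so5Summand, hp]

theorem hasSum_so5Summand_one_one_row (a : ℤ) :
    HasSum (fun b ↦ so5Summand 1 1 (a, b))
      (Real.pi ^ 2 / 2 * (1 / (a : ℝ) ^ 6) - 39 / 8 * (1 / (a : ℝ) ^ 8)) := by
  rcases eq_or_ne a 0 with rfl | ha
  · simp [so5Summand]
  convert! (hasSum_one_div_int_sq_mul_sq_sub_sq_sq ha).mul_left (1 / (a : ℝ) ^ 2) using 1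
  · ext b
    rw [one_div_mul_one_div, ← mul_assoc, ← mul_pow]
    rfl
  · have ha' : (a : ℝ) ≠ 0 := by exact_mod_cast ha
    field_simp

theorem hasSum_so5Summand_one_one : HasSum (so5Summand 1 1) (Real.pi ^ 8 / 37800) := by
  have hrows : HasSum (fun a : ℤ ↦ ∑' b, so5Summand 1 1 (a, b)) (Real.pi ^ 8 / 37800) := by
    simp only [(hasSum_so5Summand_one_one_row _).tsum_eq]
    convert! (hasSum_one_div_int_pow_six.mul_left (Real.pi ^ 2 / 2)).sub
      (hasSum_one_div_int_pow_eight.mul_left (39 / 8)) using 1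
    ring
  have hs : Summable (so5Summand 1 1) := (summable_prod_of_nonneg (so5Summand_nonneg 1 1)).mpr
    ⟨fun a ↦ (hasSum_so5Summand_one_one_row a).summable, hrows.summable⟩
  rw [← hrows.tsum_eq, ← hs.tsum_prod]
  exact hs.hasSum

theorem zetaSO_two_two_two_two : zetaSO 2 2 2 2 = Real.pi ^ 8 / 302400 := by
  have h := tsum_so5Summand_eq_eight_mul_zetaSO one_ne_zero one_ne_zero
    hasSum_so5Summand_one_one.summable
  rw [hasSum_so5Summand_one_one.tsum_eq] at h
  linarith

theorem stmt19 :
    zetaSO 2 2 2 2 = (3 / 700) * (rzeta 2) ^ 4 ∧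
    (3 / 700) * (rzeta 2) ^ 4 = (2 * 3 / (5 * (Nat.factorial 9 : ℝ))) * Real.pi ^ 8 ∧
    (2 * 3 / (5 * (Nat.factorial 9 : ℝ))) * Real.pi ^ 8 = Real.pi ^ 8 / 302400 := by
  have hfactorial : (Nat.factorial 9 : ℝ) = 362880 := by norm_num [Nat.factorial]
  rw [zetaSO_two_two_two_two, rzeta_two, hfactorial]
  refine ⟨?_, ?_, ?_⟩ <;> ring
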